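/- One-dimensional dyadic X_p-type estimate: for every p > 2 there is a constant C(p) such that for all g ∈ C_c^∞(ℝ), Σ_{I ∈ 𝓓} |I|^{−p/20} ‖g·1_I‖_{L^{20/11}(ℝ)}^p ≤ C(p) ‖g‖_{L²(ℝ)}^p, where 𝓓 is the set of all dyadic intervals of ℝ. -/

import Mathlib

/-!
Write `q = 20/11`, so that `1/q = 1/2 + 1/20` and hence `q < 2 < p`. By homogeneity one may assume
`‖g‖₂ = 1`. At the scale `|I| = 2 ^ k` split `g` at height `2 ^ (-k/2)`.

* On the low part, Hölder from `L^q` to `L^p` on `I` bounds the summand by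
  `|I| ^ (p/2 - 1) ∫_I |g_low| ^ p` (`small_term_le`).
* On the high part, Hölder from `L^q` to `L²` shows `|I| ^ (-1/20) ‖g_high‖_{L^q(I)} ≤ 1`, so the
  exponent `p` may be lowered to `q`, and the summand is at most `|I| ^ (-1/11) ∫_I |g_high| ^ q`
  (`large_term_le`).

The intervals of a fixed scale are disjoint up to endpoints, so summing over them gives integrals
over `ℝ`. After exchanging the sum over scales with the integral, the sum at each point is a
geometric series cut off at `2 ^ k ≈ |g x| ^ (-2)`, convergent because `p/2 - 1 > 0` and
`1/11 > 0`. Both series are bounded by a multiple of `|g x| ^ 2` (`tsum_small_le`,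
`tsum_large_le`), whose integral is one.
-/

open MeasureTheory Real Filter
open scoped ENNReal

/-- The dyadic interval `[2^k n, 2^k (n+1)]`, of length `2^k`. -/
def dyadInt (k n : ℤ) : Set ℝ := Set.Icc ((2:ℝ)^k * n) ((2:ℝ)^k * (n + 1))

/-- The geometric series over all dyadic scales `2 ^ k` lying below `y⁻¹`: only `k ≤ k₀` with
`2 ^ k₀ ≤ y⁻¹ < 2 ^ (k₀ + 1)` contribute, and the term at `k₀ - j` is at most `2 ^ (-θ j)`. -/
lemma tsum_dyadic_le (θ : ℝ) (hθ : 0 < θ) (y : ℝ≥0∞) (hy : y ≠ ⊤) :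
    ∑' k : ℤ, (if y * 2 ^ k ≤ 1 then (y * 2 ^ k) ^ θ else 0) ≤ (1 - (2 : ℝ≥0∞) ^ (-θ))⁻¹ := by
  rcases eq_or_ne y 0 with rfl | hy0
  · simp [hθ]
  obtain ⟨k₀, h1, h2⟩ := ENNReal.exists_mem_Ico_zpow (x := y⁻¹) (y := 2)
    (by simpa using hy) (by simpa using hy0) (by norm_num) (by norm_num)
  have hinj : Function.Injective (fun j : ℕ => k₀ - (j : ℤ)) := by
    intro a b hab
    simp only at hab
    omega
  rw [← hinj.tsum_eq, ← ENNReal.tsum_geometric]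
  · refine ENNReal.tsum_le_tsum fun j => ?_
    split_ifs
    · have hle : y * 2 ^ (k₀ - (j : ℤ)) ≤ 2 ^ (-(j : ℤ)) := by
        rw [sub_eq_add_neg, ENNReal.zpow_add (by norm_num) (by norm_num), ← mul_assoc]
        calc y * 2 ^ k₀ * 2 ^ (-(j : ℤ)) ≤ y * y⁻¹ * 2 ^ (-(j : ℤ)) := by gcongr
          _ = 2 ^ (-(j : ℤ)) := by rw [ENNReal.mul_inv_cancel hy0 hy, one_mul]
      calc _ ≤ ((2 : ℝ≥0∞) ^ (-(j : ℤ))) ^ θ := by gcongr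
        _ = _ := by
          rw [← ENNReal.rpow_intCast, ← ENNReal.rpow_natCast, ← ENNReal.rpow_mul,
            ← ENNReal.rpow_mul]
          push_cast
          ring_nf
    · exact zero_le
  · intro k hk
    have hk1 : y * 2 ^ k ≤ 1 := by
      by_contra h
      simp [h] at hk
    have hk2 : (2 : ℝ≥0∞) ^ k ≤ y⁻¹ := by
      rw [← one_div, ENNReal.le_div_iff_mul_le (Or.inl hy0) (Or.inl hy), mul_comm]
      exact hk1
    have hlt : (2 : ℝ≥0∞) ^ k < 2 ^ (k₀ + 1) := hk2.trans_lt h2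
    have : k < k₀ + 1 := by
      by_contra hcon
      push Not at hcon
      exact absurd hlt (not_lt.mpr (ENNReal.zpow_le_of_le (by norm_num) hcon))
    exact ⟨(k₀ - k).toNat, by simp only; omega⟩

lemma two_rpow_ne_top (s : ℝ) : (2 : ℝ≥0∞) ^ s ≠ ⊤ :=
  ENNReal.rpow_ne_top_of_ne_zero (by norm_num) (by norm_num)

lemma two_rpow_ne_zero (s : ℝ) : (2 : ℝ≥0∞) ^ s ≠ 0 := by
  simp [ENNReal.rpow_eq_zero_iff]

/-- Heights below `|I| ^ (-1/2)`: the sum over scales at a point where `|g|` equals `f`. -/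
lemma tsum_small_le (p : ℝ) (hp : 2 < p) (f : ℝ≥0∞) (hf : f ≠ ⊤) :
    ∑' k : ℤ, (2 : ℝ≥0∞) ^ ((k : ℝ) * (p / 2 - 1)) *
        (if f ^ (2 : ℝ) * 2 ^ k ≤ 1 then f ^ p else 0) ≤
      (1 - (2 : ℝ≥0∞) ^ (-(p / 2 - 1)))⁻¹ * f ^ (2 : ℝ) := by
  have hθ : 0 < p / 2 - 1 := by linarith
  calc _ = ∑' k : ℤ, (if f ^ (2 : ℝ) * 2 ^ k ≤ 1 then (f ^ (2 : ℝ) * 2 ^ k) ^ (p / 2 - 1) else 0)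
        * f ^ (2 : ℝ) := by
        refine tsum_congr fun k => ?_
        split_ifs
        · rw [ENNReal.mul_rpow_of_nonneg _ _ hθ.le, ← ENNReal.rpow_intCast, ← ENNReal.rpow_mul,
            ← ENNReal.rpow_mul, mul_right_comm,
            ← ENNReal.rpow_add_of_nonneg _ _ (by linarith) (by norm_num), mul_comm]
          congr 2
          ring
        · simp
    _ ≤ _ := by
        rw [ENNReal.tsum_mul_right]
        gcongr
        exact tsum_dyadic_le _ hθ _ (ENNReal.rpow_ne_top_of_nonneg (by norm_num) hf)

/-- Heights above `|I| ^ (-1/2)`: the sum over scales at a point where `|g|` equals `f`. -/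
lemma tsum_large_le (f : ℝ≥0∞) (hf : f ≠ ⊤) :
    ∑' k : ℤ, (2 : ℝ≥0∞) ^ ((k : ℝ) * (-(1 / 11))) *
        (if f ^ (2 : ℝ) * 2 ^ k ≤ 1 then 0 else f ^ (20 / 11 : ℝ)) ≤
      (1 - (2 : ℝ≥0∞) ^ (-(1 / 11 : ℝ)))⁻¹ * f ^ (2 : ℝ) := by
  rcases eq_or_ne f 0 with rfl | hf0
  · simp
  have hy0 : f ^ (2 : ℝ) ≠ 0 := by simp [hf0]
  have hyt : f ^ (2 : ℝ) ≠ ⊤ := ENNReal.rpow_ne_top_of_nonneg (by norm_num) hf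
  calc _ ≤ ∑' k : ℤ, (if (f ^ (2 : ℝ))⁻¹ * 2 ^ (-k) ≤ 1 then
          ((f ^ (2 : ℝ))⁻¹ * 2 ^ (-k)) ^ (1 / 11 : ℝ) else 0) * f ^ (2 : ℝ) := by
        refine ENNReal.tsum_le_tsum fun k => ?_
        by_cases h : f ^ (2 : ℝ) * 2 ^ k ≤ 1
        · rw [if_pos h, mul_zero]
          exact zero_le
        · have h' : (f ^ (2 : ℝ))⁻¹ * 2 ^ (-k) ≤ 1 := by
            rw [ENNReal.zpow_neg, ← ENNReal.mul_inv (Or.inl hy0) (Or.inl hyt)]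
            exact ENNReal.inv_le_one.mpr (not_le.mp h).le
          rw [if_neg h, if_pos h', ENNReal.mul_rpow_of_nonneg _ _ (by norm_num),
            ← ENNReal.rpow_intCast, ← ENNReal.rpow_mul, ← ENNReal.rpow_neg, ← ENNReal.rpow_mul,
            mul_right_comm, ← ENNReal.rpow_add _ _ hf0 hf, mul_comm]
          push_cast
          apply le_of_eq
          congr 2 <;> ring
    _ ≤ _ := by
        rw [ENNReal.tsum_mul_right]
        gcongr
        rw [← (Equiv.neg ℤ).tsum_eq]
        simp only [Equiv.neg_apply, neg_neg]
        exact tsum_dyadic_le _ (by norm_num) _ (ENNReal.inv_ne_top.mpr hy0)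

/-- Half-open version of `dyadInt`: it agrees with it up to a null set, and at a fixed scale distinct
intervals are disjoint, whereas the closed ones share endpoints. -/
def dyadIco (k n : ℤ) : Set ℝ := Set.Ico ((2:ℝ)^k * n) ((2:ℝ)^k * (n + 1))

lemma ofReal_two_zpow (k : ℤ) : ENNReal.ofReal ((2:ℝ) ^ k) = 2 ^ k := by
  rw [← Real.rpow_intCast, ← ENNReal.ofReal_rpow_of_pos (by norm_num), ENNReal.rpow_intCast,
    ENNReal.ofReal_ofNat]

lemma volume_dyadIco (k n : ℤ) : volume (dyadIco k n) = 2 ^ (k : ℝ) := by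
  rw [dyadIco, Real.volume_Ico, ENNReal.rpow_intCast]
  have : (2:ℝ)^k * (n + 1) - (2:ℝ)^k * n = 2 ^ k := by ring
  rw [this, ofReal_two_zpow]

lemma restrict_dyadInt (k n : ℤ) :
    (volume : Measure ℝ).restrict (dyadInt k n) = volume.restrict (dyadIco k n) :=
  (Measure.restrict_congr_set Ico_ae_eq_Icc).symm

lemma tsum_lintegral_dyadIco_le (k : ℤ) (h : ℝ → ℝ≥0∞) :
    ∑' n : ℤ, ∫⁻ x in dyadIco k n, h x ≤ ∫⁻ x, h x := by
  have hd : Pairwise (Function.onFun Disjoint (dyadIco k)) := by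
    intro m n hmn
    refine Set.disjoint_left.mpr fun x hm hn => hmn ?_
    have hk : (0:ℝ) < 2 ^ k := by positivity
    have h1 := lt_of_mul_lt_mul_left (hm.1.trans_lt hn.2) hk.le
    have h2 := lt_of_mul_lt_mul_left (hn.1.trans_lt hm.2) hk.le
    norm_cast at h1 h2
    omega
  have hm : ∀ n, MeasurableSet (dyadIco k n) := fun n => measurableSet_Ico
  rw [← lintegral_iUnion hm hd]
  exact setLIntegral_le_lintegral _ _

lemma weight_eq (k : ℤ) (s : ℝ) :
    ENNReal.ofReal (((2:ℝ)^k) ^ s) = (2 : ℝ≥0∞) ^ ((k : ℝ) * s) := by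
  rw [← ENNReal.ofReal_rpow_of_pos (by positivity), ofReal_two_zpow,
    ENNReal.rpow_mul, ENNReal.rpow_intCast]

lemma eLpNorm_rpow_eq (q : ℝ) (hq : 0 < q) (f : ℝ → ℂ) (μ : Measure ℝ) :
    eLpNorm f (ENNReal.ofReal q) μ ^ q = ∫⁻ x, ‖f x‖ₑ ^ q ∂μ := by
  rw [eLpNorm_eq_lintegral_rpow_enorm_toReal (by simpa using hq) ENNReal.ofReal_ne_top,
    ENNReal.toReal_ofReal hq.le, ← ENNReal.rpow_mul, one_div, inv_mul_cancel₀ hq.ne',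
    ENNReal.rpow_one]

/-- Hölder's inequality from `L^{20/11}` to `L^p` on a dyadic interval, in summand form. -/
lemma small_term_le (p : ℝ) (hp : 2 < p) (k n : ℤ) (f : ℝ → ℂ) (hf : Measurable f) :
    (2 : ℝ≥0∞) ^ ((k : ℝ) * (-(p / 20))) *
        eLpNorm f (ENNReal.ofReal (20/11)) (volume.restrict (dyadIco k n)) ^ p ≤
      (2 : ℝ≥0∞) ^ ((k : ℝ) * (p / 2 - 1)) * ∫⁻ x in dyadIco k n, ‖f x‖ₑ ^ p := by
  have hp0 : 0 < p := by linarith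
  have h := eLpNorm_le_eLpNorm_mul_rpow_measure_univ (μ := volume.restrict (dyadIco k n))
    (p := ENNReal.ofReal (20/11)) (q := ENNReal.ofReal p)
    (ENNReal.ofReal_le_ofReal (by linarith)) (f := f) hf.aestronglyMeasurable
  rw [Measure.restrict_apply_univ, volume_dyadIco, ENNReal.toReal_ofReal (by norm_num),
    ENNReal.toReal_ofReal hp0.le, ← ENNReal.rpow_mul] at h
  calc _ ≤ (2 : ℝ≥0∞) ^ ((k : ℝ) * (-(p / 20))) *
        (eLpNorm f (ENNReal.ofReal p) (volume.restrict (dyadIco k n)) *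
          2 ^ ((k : ℝ) * (1 / (20 / 11) - 1 / p))) ^ p := by gcongr
    _ = _ := by
      rw [ENNReal.mul_rpow_of_nonneg _ _ hp0.le, eLpNorm_rpow_eq _ hp0, mul_comm, mul_assoc,
        ← ENNReal.rpow_mul, ← ENNReal.rpow_add _ _ (by norm_num) (by norm_num), mul_comm]
      congr 2
      field_simp
      ring

/-- For a function of `L²` norm at most one, Hölder's inequality from `L^{20/11}` to `L²` makes the
normalised local norm at most one, which allows the exponent `p` to be replaced by `20/11`. -/
lemma large_term_le (p : ℝ) (hp : 2 < p) (k n : ℤ) (f : ℝ → ℂ) (hf : Measurable f)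
    (hf1 : eLpNorm f 2 volume ≤ 1) :
    (2 : ℝ≥0∞) ^ ((k : ℝ) * (-(p / 20))) *
        eLpNorm f (ENNReal.ofReal (20/11)) (volume.restrict (dyadIco k n)) ^ p ≤
      (2 : ℝ≥0∞) ^ ((k : ℝ) * (-(1 / 11))) * ∫⁻ x in dyadIco k n, ‖f x‖ₑ ^ (20/11 : ℝ) := by
  have hp0 : 0 < p := by linarith
  have h := eLpNorm_le_eLpNorm_mul_rpow_measure_univ (μ := volume.restrict (dyadIco k n))
    (p := ENNReal.ofReal (20/11)) (q := 2)
    (by rw [← ENNReal.ofReal_ofNat 2]; exact ENNReal.ofReal_le_ofReal (by norm_num))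
    (f := f) hf.aestronglyMeasurable
  rw [Measure.restrict_apply_univ, volume_dyadIco, ENNReal.toReal_ofReal (by norm_num),
    ENNReal.toReal_ofNat, ← ENNReal.rpow_mul] at h
  set N := eLpNorm f (ENNReal.ofReal (20/11)) (volume.restrict (dyadIco k n)) with hN
  have hb : (2 : ℝ≥0∞) ^ ((k : ℝ) * (-(1 / 20))) * N ≤ 1 := by
    calc _ ≤ (2 : ℝ≥0∞) ^ ((k : ℝ) * (-(1 / 20))) *
          (1 * 2 ^ ((k : ℝ) * (1 / (20 / 11) - 1 / 2))) := by
            gcongr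
            exact h.trans (by gcongr; exact (eLpNorm_restrict_le _ _ _ _).trans hf1)
      _ = 1 := by
        rw [one_mul, ← ENNReal.rpow_add _ _ (by norm_num) (by norm_num), ← mul_add]
        norm_num
  calc _ = ((2 : ℝ≥0∞) ^ ((k : ℝ) * (-(1 / 20))) * N) ^ p := by
        rw [ENNReal.mul_rpow_of_nonneg _ _ hp0.le, ← ENNReal.rpow_mul]
        congr 2
        ring
    -- the base is at most one, so lowering the exponent from `p` to `20/11` increases the power
    _ ≤ ((2 : ℝ≥0∞) ^ ((k : ℝ) * (-(1 / 20))) * N) ^ (20/11 : ℝ) :=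
        ENNReal.rpow_le_rpow_of_exponent_ge hb (by linarith)
    _ = _ := by
        rw [ENNReal.mul_rpow_of_nonneg _ _ (by norm_num), ← ENNReal.rpow_mul, hN,
          eLpNorm_rpow_eq _ (by norm_num)]
        congr 2
        ring

/-- Points where `|g| ≤ 2 ^ (-k/2)`, written as `|g| ^ 2 * 2 ^ k ≤ 1`. -/
def lowSet (g : ℝ → ℂ) (k : ℤ) : Set ℝ := {x | ‖g x‖ₑ ^ (2 : ℝ) * 2 ^ k ≤ 1}

lemma measurableSet_lowSet (g : ℝ → ℂ) (hg : Measurable g) (k : ℤ) :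
    MeasurableSet (lowSet g k) :=
  measurableSet_le (by fun_prop) measurable_const

/-- The constant for `L²`-normalised functions. -/
noncomputable def XpConst (p : ℝ) : ℝ≥0∞ :=
  2 ^ (p - 1) * ((1 - (2 : ℝ≥0∞) ^ (-(p / 2 - 1)))⁻¹ + (1 - (2 : ℝ≥0∞) ^ (-(1 / 11 : ℝ)))⁻¹)

lemma XpConst_ne_top (p : ℝ) (hp : 2 < p) : XpConst p ≠ ⊤ := by
  have key : ∀ θ : ℝ, 0 < θ → (1 - (2 : ℝ≥0∞) ^ (-θ))⁻¹ ≠ ⊤ := by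
    intro θ hθ
    rw [ENNReal.inv_ne_top, ne_eq, tsub_eq_zero_iff_le, not_le]
    exact ENNReal.rpow_lt_one_of_one_lt_of_neg (by norm_num) (by linarith)
  exact ENNReal.mul_ne_top (two_rpow_ne_top _)
    (ENNReal.add_ne_top.mpr ⟨key _ (by linarith), key _ (by norm_num)⟩)

/-- Splitting `g` at the height `2 ^ (-k/2)` adapted to the scale; the factor `2 ^ (p - 1)` comes
from convexity of `t ↦ t ^ p`. -/
lemma term_le (p : ℝ) (hp : 2 < p) (g : ℝ → ℂ) (hg : Measurable g)
    (hg1 : eLpNorm g 2 volume = 1) (k n : ℤ) :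
    ENNReal.ofReal (((2:ℝ)^k) ^ (-(p/20))) *
        eLpNorm ((dyadInt k n).indicator g) (ENNReal.ofReal (20/11)) volume ^ p ≤
      2 ^ (p - 1) * ((2 : ℝ≥0∞) ^ ((k : ℝ) * (p / 2 - 1)) *
          (∫⁻ x in dyadIco k n, ‖(lowSet g k).indicator g x‖ₑ ^ p) +
        (2 : ℝ≥0∞) ^ ((k : ℝ) * (-(1 / 11))) *
          ∫⁻ x in dyadIco k n, ‖(lowSet g k)ᶜ.indicator g x‖ₑ ^ (20/11 : ℝ)) := by
  have hS := measurableSet_lowSet g hg k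
  have hs := small_term_le p hp k n _ (hg.indicator hS)
  have hl := large_term_le p hp k n _ (hg.indicator hS.compl)
    ((eLpNorm_indicator_le _).trans hg1.le)
  rw [weight_eq, eLpNorm_indicator_eq_eLpNorm_restrict (show MeasurableSet (dyadInt k n) from
    measurableSet_Icc), restrict_dyadInt]
  have htri : eLpNorm g (ENNReal.ofReal (20/11)) (volume.restrict (dyadIco k n)) ≤
      eLpNorm ((lowSet g k).indicator g) (ENNReal.ofReal (20/11))
        (volume.restrict (dyadIco k n)) +
      eLpNorm ((lowSet g k)ᶜ.indicator g) (ENNReal.ofReal (20/11))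
        (volume.restrict (dyadIco k n)) := by
    have h := eLpNorm_add_le (μ := volume.restrict (dyadIco k n)) (p := ENNReal.ofReal (20/11))
      (hg.indicator hS).aestronglyMeasurable (hg.indicator hS.compl).aestronglyMeasurable
      (by rw [← ENNReal.ofReal_one]; exact ENNReal.ofReal_le_ofReal (by norm_num))
    rwa [Set.indicator_self_add_compl] at h
  calc _ ≤ (2 : ℝ≥0∞) ^ ((k : ℝ) * (-(p / 20))) * (2 ^ (p - 1) * (
      eLpNorm ((lowSet g k).indicator g) (ENNReal.ofReal (20/11))
        (volume.restrict (dyadIco k n)) ^ p +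
      eLpNorm ((lowSet g k)ᶜ.indicator g) (ENNReal.ofReal (20/11))
        (volume.restrict (dyadIco k n)) ^ p)) := by
        gcongr
        exact (ENNReal.rpow_le_rpow htri (by linarith)).trans
          (ENNReal.rpow_add_le_mul_rpow_add_rpow _ _ (by linarith))
    _ ≤ _ := by
        rw [mul_left_comm, mul_add]
        gcongr

lemma normalized_estimate (p : ℝ) (hp : 2 < p) (g : ℝ → ℂ) (hg : Measurable g)
    (hg1 : eLpNorm g 2 volume = 1) :
    (∑' r : ℤ × ℤ, ENNReal.ofReal (((2:ℝ)^r.1) ^ (-(p/20))) *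
        eLpNorm ((dyadInt r.1 r.2).indicator g) (ENNReal.ofReal (20/11)) volume ^ p) ≤
      XpConst p := by
  have hint : ∫⁻ x, ‖g x‖ₑ ^ (2 : ℝ) = 1 := by
    rw [← eLpNorm_rpow_eq 2 (by norm_num), ENNReal.ofReal_ofNat, hg1, ENNReal.one_rpow]
  have hm1 : ∀ k, Measurable fun x => ‖(lowSet g k).indicator g x‖ₑ ^ p := fun k =>
    (hg.indicator (measurableSet_lowSet g hg k)).enorm.pow_const _
  have hm2 : ∀ k, Measurable fun x => ‖(lowSet g k)ᶜ.indicator g x‖ₑ ^ (20/11 : ℝ) := fun k =>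
    (hg.indicator (measurableSet_lowSet g hg k).compl).enorm.pow_const _
  have hsmall : ∑' k : ℤ, (2 : ℝ≥0∞) ^ ((k : ℝ) * (p / 2 - 1)) *
      ∫⁻ x, ‖(lowSet g k).indicator g x‖ₑ ^ p ≤ (1 - (2 : ℝ≥0∞) ^ (-(p / 2 - 1)))⁻¹ := by
    simp_rw [← lintegral_const_mul _ (hm1 _)]
    rw [← lintegral_tsum fun k => ((hm1 k).const_mul _).aemeasurable]
    calc _ ≤ ∫⁻ x, (1 - (2 : ℝ≥0∞) ^ (-(p / 2 - 1)))⁻¹ * ‖g x‖ₑ ^ (2 : ℝ) := by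
          refine lintegral_mono fun x => le_trans (le_of_eq ?_)
            (tsum_small_le p hp ‖g x‖ₑ enorm_ne_top)
          refine tsum_congr fun k => ?_
          by_cases h : ‖g x‖ₑ ^ (2 : ℝ) * 2 ^ k ≤ 1
          · rw [if_pos h, Set.indicator_of_mem (show x ∈ lowSet g k from h)]
          · rw [if_neg h, Set.indicator_of_notMem (show x ∉ lowSet g k from h), enorm_zero,
              ENNReal.zero_rpow_of_pos (by linarith)]
      _ = _ := by rw [lintegral_const_mul _ (hg.enorm.pow_const _), hint, mul_one]
  have hlarge : ∑' k : ℤ, (2 : ℝ≥0∞) ^ ((k : ℝ) * (-(1 / 11))) *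
      ∫⁻ x, ‖(lowSet g k)ᶜ.indicator g x‖ₑ ^ (20/11 : ℝ) ≤
        (1 - (2 : ℝ≥0∞) ^ (-(1 / 11 : ℝ)))⁻¹ := by
    simp_rw [← lintegral_const_mul _ (hm2 _)]
    rw [← lintegral_tsum fun k => ((hm2 k).const_mul _).aemeasurable]
    calc _ ≤ ∫⁻ x, (1 - (2 : ℝ≥0∞) ^ (-(1 / 11 : ℝ)))⁻¹ * ‖g x‖ₑ ^ (2 : ℝ) := by
          refine lintegral_mono fun x => le_trans (le_of_eq ?_)
            (tsum_large_le ‖g x‖ₑ enorm_ne_top)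
          refine tsum_congr fun k => ?_
          by_cases h : ‖g x‖ₑ ^ (2 : ℝ) * 2 ^ k ≤ 1
          · rw [if_pos h, Set.indicator_of_notMem (show x ∉ (lowSet g k)ᶜ from not_not.mpr h),
              enorm_zero, ENNReal.zero_rpow_of_pos (by norm_num)]
          · rw [if_neg h, Set.indicator_of_mem (show x ∈ (lowSet g k)ᶜ from h)]
      _ = _ := by rw [lintegral_const_mul _ (hg.enorm.pow_const _), hint, mul_one]
  calc _ ≤ ∑' r : ℤ × ℤ, 2 ^ (p - 1) * ((2 : ℝ≥0∞) ^ ((r.1 : ℝ) * (p / 2 - 1)) *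
          (∫⁻ x in dyadIco r.1 r.2, ‖(lowSet g r.1).indicator g x‖ₑ ^ p) +
        (2 : ℝ≥0∞) ^ ((r.1 : ℝ) * (-(1 / 11))) *
          ∫⁻ x in dyadIco r.1 r.2, ‖(lowSet g r.1)ᶜ.indicator g x‖ₑ ^ (20/11 : ℝ)) :=
        ENNReal.tsum_le_tsum fun r => term_le p hp g hg hg1 r.1 r.2
    _ = 2 ^ (p - 1) * ((∑' k : ℤ, (2 : ℝ≥0∞) ^ ((k : ℝ) * (p / 2 - 1)) *
          ∑' n : ℤ, ∫⁻ x in dyadIco k n, ‖(lowSet g k).indicator g x‖ₑ ^ p) +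
        ∑' k : ℤ, (2 : ℝ≥0∞) ^ ((k : ℝ) * (-(1 / 11))) *
          ∑' n : ℤ, ∫⁻ x in dyadIco k n, ‖(lowSet g k)ᶜ.indicator g x‖ₑ ^ (20/11 : ℝ)) := by
        rw [ENNReal.tsum_mul_left, ENNReal.tsum_add, ENNReal.tsum_prod', ENNReal.tsum_prod']
        simp_rw [ENNReal.tsum_mul_left]
    _ ≤ XpConst p := by
        unfold XpConst
        gcongr
        · refine le_trans (ENNReal.tsum_le_tsum fun k => ?_) hsmall
          gcongr
          exact tsum_lintegral_dyadIco_le k _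
        · refine le_trans (ENNReal.tsum_le_tsum fun k => ?_) hlarge
          gcongr
          exact tsum_lintegral_dyadIco_le k _

/-- **One-dimensional dyadic `X_p`-type estimate**: for `p > 2`,
`Σ_{I ∈ 𝓓} |I|^{−p/20} ‖g·1_I‖_{L^{20/11}}^p ≤ C(p) ‖g‖_{L²}^p` for `g ∈ C_c^∞(ℝ)`. -/
theorem one_dimensional_dyadic_Xp_estimate (p : ℝ) (hp : 2 < p) :
    ∃ C : ℝ, 0 < C ∧ ∀ g : ℝ → ℂ, ContDiff ℝ (⊤ : ℕ∞) g → HasCompactSupport g →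
      (∑' r : ℤ × ℤ,
        ENNReal.ofReal (((2:ℝ)^r.1) ^ (-(p/20))) *
          eLpNorm ((dyadInt r.1 r.2).indicator g) (ENNReal.ofReal (20/11))
            (volume : Measure ℝ) ^ p) ≤
        ENNReal.ofReal C * (eLpNorm g 2 (volume : Measure ℝ)) ^ p := by
  refine ⟨(XpConst p).toReal + 1, by positivity, fun g hgs hgc => ?_⟩
  have hp0 : 0 < p := by linarith
  have hg : Measurable g := hgs.continuous.measurable
  have hC : XpConst p ≤ ENNReal.ofReal ((XpConst p).toReal + 1) := by
    calc XpConst p = ENNReal.ofReal (XpConst p).toReal :=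
          (ENNReal.ofReal_toReal (XpConst_ne_top p hp)).symm
      _ ≤ _ := ENNReal.ofReal_le_ofReal (by linarith)
  have htop : eLpNorm g 2 volume ≠ ⊤ :=
    (hgs.continuous.memLp_of_hasCompactSupport (p := 2) (μ := volume) hgc).2.ne
  rcases eq_or_ne (eLpNorm g 2 volume) 0 with h0 | h0
  · have hae : g =ᵐ[volume] 0 :=
      (eLpNorm_eq_zero_iff hg.aestronglyMeasurable (by norm_num)).mp h0
    have hz : ∀ r : ℤ × ℤ, eLpNorm ((dyadInt r.1 r.2).indicator g) (ENNReal.ofReal (20/11))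
        volume = 0 := fun r => le_antisymm ((eLpNorm_indicator_le _).trans
          (by rw [eLpNorm_congr_ae hae, eLpNorm_zero])) zero_le
    simp [hz, hp0]
  -- Normalise to unit `L²` norm; both sides are homogeneous of degree `p`.
  set A := eLpNorm g 2 volume with hA
  set c : ℝ := A.toReal with hc
  have hc0 : 0 < c := ENNReal.toReal_pos h0 htop
  have hcA : ‖(c : ℝ)‖ₑ = A := by
    rw [Real.enorm_of_nonneg hc0.le, hc, ENNReal.ofReal_toReal htop]
  set u : ℝ → ℂ := c⁻¹ • g with hu
  have hgu : g = c • u := by rw [hu, smul_smul, mul_inv_cancel₀ hc0.ne', one_smul]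
  have hum : Measurable u := hg.const_smul c⁻¹
  have hu1 : eLpNorm u 2 volume = 1 := by
    rw [hu, eLpNorm_const_smul, enorm_inv hc0.ne', hcA, ← hA, ENNReal.inv_mul_cancel h0 htop]
  calc _ = ∑' r : ℤ × ℤ, A ^ p * (ENNReal.ofReal (((2:ℝ)^r.1) ^ (-(p/20))) *
          eLpNorm ((dyadInt r.1 r.2).indicator u) (ENNReal.ofReal (20/11)) volume ^ p) := by
        refine tsum_congr fun r => ?_
        conv_lhs => rw [hgu]
        rw [show (dyadInt r.1 r.2).indicator (c • u) = c • (dyadInt r.1 r.2).indicator u from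
          Set.indicator_const_smul _ c u, eLpNorm_const_smul, hcA,
          ENNReal.mul_rpow_of_nonneg _ _ hp0.le, mul_left_comm]
    _ ≤ A ^ p * XpConst p := by
        rw [ENNReal.tsum_mul_left]
        gcongr
        exact normalized_estimate p hp u hum hu1
    _ ≤ _ := by
        rw [mul_comm]
        gcongr
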